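/- Let c ∈ V be controllable. Then: (i) every equivalence class 𝒯_i^c of neighbors of c is jointly controllable; and (ii) for every equivalence class 𝒯_i^c and every jointly controllable set A ⊆ V, the three sets A ∩ 𝒯_i^c, A \ 𝒯_i^c and 𝒯_i^c \ A are jointly controllable. -/

import Mathlib

/-!
Write `x_v = q_c - q_v + δ_v`, where `δ_v` is the shift that makes `V''_{cv}` adjusted (no term of
second-highest degree), so that two neighbors of `c` are equivalent iff their adjusted polynomials
coincide. To a family `F = (F_v)` of real polynomials associate the field
`Φ F = ∑_{v ≠ c} F_v(x_v) ∂_{p_v}`, and let `L` be the space of those `F` with `Φ F ∈ 𝓜`. Three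
brackets drive the proof:

* `[∂_{q_c}, X₀]` is, up to a multiple of `∂_{p_c}`, the field of the family `f` of adjusted
  polynomials (zero off the neighbors of `c`), so `f ∈ L`;
* `[∂_{q_c}, Φ F] = Φ F'`, so `L` is stable under `F ↦ F'`;
* `[[Φ F, X₀], Φ H] = -Φ (F H)'`, so `L` is stable under `(F, H) ↦ (F H)'`.

The rest is algebra. Let `I_j` be the space of `a : V → ℝ` with `(a_v X ^ j)_v ∈ L`. The first
stability gives `I_{j+1} ⊆ I_j`, the second `I_i I_j ⊆ I_{i+j-1}`. For `a ∈ I_1` the operator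
`F ↦ (a X F)'` preserves `L` and multiplies the degree `j` coefficient at `v` by `a_v (j + 1)`.
Polynomials in this operator, chosen by interpolation, multiply it by any prescribed function of
`a_v (j + 1)`. Hence `I_1` is stable under `a ↦ φ ∘ a` for `φ 0 = 0`, and when `1_K ∈ I_1`, both the
restriction of `F ∈ L` to `K` and each homogeneous part of that restriction stay in `L`.

Let `n + 1` be the maximal degree of `f` and `K` the set where it is attained. Adjustedness makes
the `n`-th derivative of `f` equal to `b_v X` on `K` and constant elsewhere, so the derivative of
its square is `2 b_v² X` on `K` and zero elsewhere, whence `1_K ∈ I_1`. On `K`, all coefficients of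
`f` of positive degree belong to `I_1`, and so does the product of its leading and constant
coefficients; intersecting level sets gives the indicator of every class contained in `K`. The
other classes follow by induction, after replacing `f` by its restriction to the complement of `K`.

A class `T` thus has `1_T ∈ I_1 ⊆ I_0`, which is (i). A jointly controllable `A` has `1_A ∈ I_0`, so
`1_{A ∩ T} ∈ I_0 I_1 ⊆ I_0`, and the two differences follow by subtraction.
-/

open scoped Classical
open Polynomial

noncomputable section

/-- Phase space ℝ^{2|V|}: positions `q = x.1` and momenta `p = x.2`. -/
abbrev Phase (V : Type) := (V → ℝ) × (V → ℝ)

/-- Lie bracket of vector fields: `[Y,Z](x) = DZ(x)·Y(x) − DY(x)·Z(x)`. -/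
def lieB {V : Type} [Fintype V] (Y Z : Phase V → Phase V) : Phase V → Phase V :=
  fun x => fderiv ℝ Z x (Y x) - fderiv ℝ Y x (Z x)

/-- The constant vector field `∂_{p_v}`. -/
def dp {V : Type} [Fintype V] [DecidableEq V] (v : V) : Phase V → Phase V :=
  fun _ => (0, Pi.single v 1)

/-- The constant vector field `∂_{q_v}`. -/
def dq {V : Type} [Fintype V] [DecidableEq V] (v : V) : Phase V → Phase V :=
  fun _ => (Pi.single v 1, 0)

/-- The constant vector field `∑_{v ∈ A} ∂_{p_v}`. -/
def dpSum {V : Type} [Fintype V] [DecidableEq V] (A : Finset V) : Phase V → Phase V :=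
  fun _ => (0, ∑ v ∈ A, Pi.single v 1)

/-- The constant vector field `∑_{v ∈ A} ∂_{q_v}`. -/
def dqSum {V : Type} [Fintype V] [DecidableEq V] (A : Finset V) : Phase V → Phase V :=
  fun _ => (∑ v ∈ A, Pi.single v 1, 0)

/-- The drift vector field
`X₀ = −∑_{v∈V*} γ_v p_v ∂_{p_v} + ∑_{v∈V} (p_v ∂_{q_v} − U_v'(q_v) ∂_{p_v})
      − ∑_{{u,v}∈E} V_{uv}'(q_u − q_v)(∂_{p_u} − ∂_{p_v})`,
written componentwise (using the symmetry `V_{vu}(x) = V_{uv}(−x)` of the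
interaction potentials, the `∂_{p_v}`-component of the edge term at a vertex `v` is
`−∑_{w ~ v} V_{vw}'(q_v − q_w)`). -/
def X0 {V : Type} [Fintype V] [DecidableEq V] (G : SimpleGraph V) [DecidableRel G.Adj]
    (γ : V → ℝ) (U : V → ℝ → ℝ) (Vp : V → V → Polynomial ℝ) : Phase V → Phase V :=
  fun x =>
    (x.2, fun v =>
      -(γ v) * x.2 v - deriv (U v) (x.1 v) -
        ∑ w ∈ Finset.univ.filter (fun w => G.Adj v w),
          (derivative (Vp v w)).eval (x.1 v - x.1 w))

/-- The smallest collection `𝓜` of vector fields on `ℝ^{2|V|}` that contains `∂_{p_v}`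
for every `v ∈ V*`, and is closed under linear combinations, Lie brackets,
bracketing with `X₀`, and multiplication by smooth scalar functions. -/
inductive MM {V : Type} [Fintype V] [DecidableEq V] (Vstar : Finset V)
    (X₀ : Phase V → Phase V) : (Phase V → Phase V) → Prop
  | basic (v : V) (hv : v ∈ Vstar) : MM Vstar X₀ (dp v)
  | add {Y Z : Phase V → Phase V} : MM Vstar X₀ Y → MM Vstar X₀ Z → MM Vstar X₀ (Y + Z)
  | smul (a : ℝ) {Y : Phase V → Phase V} : MM Vstar X₀ Y → MM Vstar X₀ (a • Y)
  | lie {Y Z : Phase V → Phase V} : MM Vstar X₀ Y → MM Vstar X₀ Z → MM Vstar X₀ (lieB Y Z)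
  | lieX {Y : Phase V → Phase V} : MM Vstar X₀ Y → MM Vstar X₀ (lieB Y X₀)
  | mulS (f : Phase V → ℝ) (hf : ContDiff ℝ (⊤ : ℕ∞) f) {Y : Phase V → Phase V} :
      MM Vstar X₀ Y → MM Vstar X₀ (fun x => f x • Y x)

/-- A vertex `v` is controllable if `∂_{q_v} ∈ 𝓜` and `∂_{p_v} ∈ 𝓜`. -/
def Controllable {V : Type} [Fintype V] [DecidableEq V] (Vstar : Finset V)
    (X₀ : Phase V → Phase V) (v : V) : Prop :=
  MM Vstar X₀ (dq v) ∧ MM Vstar X₀ (dp v)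

/-- Two polynomials are equivalent if `f(·) = g(· + δ)` for some `δ ∈ ℝ`. -/
def PolyEquiv (f g : Polynomial ℝ) : Prop :=
  ∃ δ : ℝ, ∀ x : ℝ, f.eval x = g.eval (x + δ)

/-- The set 𝒯 of neighbors ("targets") of a vertex `c`. -/
def Tset {V : Type} [Fintype V] [DecidableEq V] (G : SimpleGraph V) [DecidableRel G.Adj]
    (c : V) : Finset V :=
  Finset.univ.filter fun w => G.Adj c w

/-- The shift making a polynomial `g = ∑ a_i t^i/i!` of degree `k` adjusted
(i.e. killing the coefficient `a_{k−1}`), namely `a_{k−1}/a_k = coeff_{k−1}/(k·coeff_k)`. -/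
def adjShift (g : Polynomial ℝ) : ℝ :=
  g.coeff (g.natDegree - 1) / ((g.natDegree : ℝ) * g.leadingCoeff)

/-- The adjusted representation `g̃(·) = g(· − a_{k−1}/a_k)` of a polynomial `g`. -/
def adjRep (g : Polynomial ℝ) : Polynomial ℝ :=
  g.comp (Polynomial.X - Polynomial.C (adjShift g))

/-- `f̃_v`, the adjusted representation of `V''_{cv}`. -/
def ft {V : Type} (Vp : V → V → Polynomial ℝ) (c v : V) : Polynomial ℝ :=
  adjRep (derivative (derivative (Vp c v)))

/-- `d = max_{v∈𝒯} d_v`, the maximal degree of the adjusted polynomials `f̃_v`, `v ∈ 𝒯`. -/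
def dmax {V : Type} [Fintype V] [DecidableEq V] (G : SimpleGraph V) [DecidableRel G.Adj]
    (Vp : V → V → Polynomial ℝ) (c : V) : ℕ :=
  (Tset G c).sup fun v => (ft Vp c v).natDegree

/-- `D^d = {v ∈ 𝒯 : d_v = d}`, the neighbors of `c` of maximal adjusted degree. -/
def Dd {V : Type} [Fintype V] [DecidableEq V] (G : SimpleGraph V) [DecidableRel G.Adj]
    (Vp : V → V → Polynomial ℝ) (c : V) : Finset V :=
  (Tset G c).filter fun v => (ft Vp c v).natDegree = dmax G Vp c

/-- The coefficient `b_{vℓ}` in `f̃_v(x) = ∑_j b_{vj} x^j/j!`, i.e. `b_{vℓ} = ℓ!·coeff_ℓ(f̃_v)`. -/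
def bcoef {V : Type} (Vp : V → V → Polynomial ℝ) (c v : V) (ℓ : ℕ) : ℝ :=
  (Nat.factorial ℓ : ℝ) * (ft Vp c v).coeff ℓ

/-- The scalar function `x_v = q_c − q_v + δ_{cv}`, with `δ_{cv}` the adjusting shift
of `V''_{cv}`. -/
def xv {V : Type} [Fintype V] (Vp : V → V → Polynomial ℝ) (c v : V) : Phase V → ℝ :=
  fun x => x.1 c - x.1 v + adjShift (derivative (derivative (Vp c v)))

/-! ### Families of polynomials -/

theorem nextCoeff_taylor {R : Type*} [CommRing R] (p : R[X]) (r : R) :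
    (taylor r p).nextCoeff = p.nextCoeff + p.natDegree * r * p.leadingCoeff := by
  obtain hp | ⟨k, hk⟩ : p.natDegree = 0 ∨ ∃ k, p.natDegree = k + 1 :=
    Nat.eq_zero_or_eq_succ_pred p.natDegree |>.imp_right fun h => ⟨_, h⟩
  · simp [nextCoeff, hp]
  · have hdeg : (hasseDeriv k p).natDegree < 2 :=
      (natDegree_hasseDeriv_le p k).trans_lt (by lia)
    rw [nextCoeff_of_natDegree_pos (by rw [natDegree_taylor]; lia),
      nextCoeff_of_natDegree_pos (by lia), leadingCoeff, natDegree_taylor, hk, Nat.add_sub_cancel,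
      taylor_coeff, eval_eq_sum_range' hdeg]
    simp only [hasseDeriv_coeff, Finset.sum_range_succ, Finset.range_one, Finset.sum_singleton,
      zero_add, Nat.choose_self, Nat.cast_one, one_mul, pow_zero, mul_one, add_comm 1 k,
      Nat.choose_succ_self_right, Nat.cast_add, pow_one]
    ring

theorem taylor_eq_self_of_nextCoeff_eq_zero {R : Type*} [CommRing R] [IsDomain R] [CharZero R]
    {p : R[X]} {r : R} (hp : p.nextCoeff = 0) (hr : (taylor r p).nextCoeff = 0) :
    taylor r p = p := by
  rw [nextCoeff_taylor, hp, zero_add, mul_eq_zero, mul_eq_zero, Nat.cast_eq_zero,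
    leadingCoeff_eq_zero] at hr
  obtain (hdeg | rfl) | rfl := hr
  · rw [eq_C_of_natDegree_eq_zero hdeg, taylor_C]
  · exact taylor_zero p
  · exact map_zero _

theorem iterate_derivative_of_nextCoeff_eq_zero {R : Type*} [CommRing R] {p : R[X]} {n : ℕ}
    (hdeg : p.natDegree = n + 1) (hp : p.nextCoeff = 0) :
    derivative^[n] p = monomial 1 ((n + 1).factorial * p.leadingCoeff) := by
  rw [nextCoeff_of_natDegree_pos (by lia), hdeg, Nat.add_sub_cancel] at hp
  rw [leadingCoeff, hdeg]
  ext j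
  rw [coeff_iterate_derivative, coeff_monomial]
  obtain _ | _ | j := j
  · simp [hp]
  · have hfact := Nat.factorial_mul_descFactorial (Nat.le_succ n)
    rw [Nat.succ_eq_add_one, Nat.add_sub_cancel_left, Nat.factorial_one, one_mul] at hfact
    rw [if_pos rfl, zero_add, add_comm 1 n, hfact, nsmul_eq_mul]
  · rw [coeff_eq_zero_of_natDegree_lt (by lia), smul_zero, if_neg (by lia)]

/-- Stability of a space of families of polynomials under `F ↦ F'` and `(F, H) ↦ (F H)'`: the
algebraic trace of the closure of `𝓜` under Lie brackets. -/
structure DerivMulClosed {ι R : Type*} [CommRing R] (L : Submodule R (ι → R[X])) : Prop where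
  derivative_mem {F : ι → R[X]} : F ∈ L → (fun v => derivative (F v)) ∈ L
  derivative_mul_mem {F H : ι → R[X]} : F ∈ L → H ∈ L → (fun v => derivative (F v * H v)) ∈ L

/-- The space `I_j` of those `a : ι → R` for which the family `(a_v X ^ j)_v` lies in `L`. -/
def coeffSpace {ι R : Type*} [CommRing R] (L : Submodule R (ι → R[X])) (j : ℕ) :
    Submodule R (ι → R) :=
  L.comap ((monomial j).compLeft ι)

theorem mem_coeffSpace {ι R : Type*} [CommRing R] {L : Submodule R (ι → R[X])} {j : ℕ}
    {a : ι → R} : a ∈ coeffSpace L j ↔ (fun v => monomial j (a v)) ∈ L :=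
  Iff.rfl

/-- The operator `F ↦ (a X F)'`, a weighted Euler operator: it is diagonal on monomials, with
eigenvalue `a_v (j + 1)` on the degree `j` part at `v`. -/
def weightedEuler {ι R : Type*} [CommRing R] (a : ι → R) : Module.End R (ι → R[X]) :=
  LinearMap.pi fun v => derivative ∘ₗ LinearMap.mulLeft R (monomial 1 (a v)) ∘ₗ LinearMap.proj v

theorem coeff_weightedEuler {ι R : Type*} [CommRing R] (a : ι → R) (F : ι → R[X]) (v : ι) (j : ℕ) :
    (weightedEuler a F v).coeff j = a v * (j + 1) * (F v).coeff j := by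
  simp only [weightedEuler, LinearMap.pi_apply, LinearMap.comp_apply, LinearMap.proj_apply,
    LinearMap.mulLeft_apply, coeff_derivative, ← C_mul_X_eq_monomial,
    mul_assoc, coeff_C_mul, coeff_X_mul]
  ring

theorem coeff_aeval_weightedEuler {ι R : Type*} [CommRing R] (a : ι → R) (q : R[X])
    (F : ι → R[X]) (v : ι) (j : ℕ) :
    (aeval (weightedEuler a) q F v).coeff j = q.eval (a v * (j + 1)) * (F v).coeff j := by
  induction q using Polynomial.induction_on' generalizing F with
  | add p q hp hq => simp [hp, hq, add_mul]
  | monomial n r =>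
    have hpow : ((weightedEuler a ^ n) F v).coeff j = (a v * (j + 1)) ^ n * (F v).coeff j := by
      induction n generalizing F with
      | zero => simp
      | succ n ih => rw [pow_succ, Module.End.mul_apply, ih, coeff_weightedEuler]; ring
    simp [aeval_monomial, hpow, mul_assoc]

theorem mem_coeffSpace_of_derivative_mem {ι R : Type*} [Field R] [CharZero R]
    {L : Submodule R (ι → R[X])} {a : ι → R} {j : ℕ}
    (h : (fun v => derivative (monomial (j + 1) (a v))) ∈ L) : a ∈ coeffSpace L j := by
  have hj : (j + 1 : R) ≠ 0 := j.cast_add_one_ne_zero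
  rw [mem_coeffSpace]
  convert L.smul_mem (j + 1 : R)⁻¹ h using 1
  funext v
  simp only [Pi.smul_apply, derivative_monomial, Nat.add_sub_cancel, smul_monomial, smul_eq_mul]
  push_cast
  field_simp

namespace DerivMulClosed

theorem iterate_derivative_mem {ι R : Type*} [CommRing R] {L : Submodule R (ι → R[X])}
    (hL : DerivMulClosed L) {F : ι → R[X]} (hF : F ∈ L) (n : ℕ) :
    (fun v => derivative^[n] (F v)) ∈ L := by
  induction n with
  | zero => exact hF
  | succ n ih => simpa only [Function.iterate_succ_apply'] using hL.derivative_mem ih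

theorem mem_of_coeff_eq {ι R : Type*} [Finite ι] [Field R]
    {L : Submodule R (ι → R[X])} (hL : DerivMulClosed L) {a : ι → R}
    (ha : a ∈ coeffSpace L 1) {F H : ι → R[X]} (hF : F ∈ L) (ψ : R → R)
    (hH : ∀ v j, (H v).coeff j = ψ (a v * (j + 1)) * (F v).coeff j) : H ∈ L := by
  have := Fintype.ofFinite ι
  have hdeg : ∀ v, (F v).natDegree ≤ Finset.univ.sup fun v => (F v).natDegree := fun v =>
    Finset.le_sup (f := fun v => (F v).natDegree) (Finset.mem_univ v)
  set N := Finset.univ.sup fun v => (F v).natDegree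
  let s : Finset R := Finset.image (fun z : ι × ℕ => a z.1 * (z.2 + 1))
    (Finset.univ ×ˢ Finset.range (N + 1))
  have hinv : L ≤ L.comap (weightedEuler a) := fun _ h => hL.derivative_mul_mem ha h
  convert aeval_apply_smul_mem_of_le_comap hF (Lagrange.interpolate s id ψ) _ hinv using 1
  ext v j
  rw [hH]
  refine Eq.trans ?_ (coeff_aeval_weightedEuler a _ F v j).symm
  by_cases hj : j ≤ N
  · have hmem : a v * (j + 1) ∈ s :=
      Finset.mem_image.2 ⟨(v, j), by simpa [Nat.lt_succ_iff] using hj, rfl⟩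
    exact congrArg (· * (F v).coeff j)
      (Lagrange.eval_interpolate_at_node ψ (Set.injOn_id _) hmem).symm
  · rw [coeff_eq_zero_of_natDegree_lt ((hdeg v).trans_lt (not_le.1 hj)), mul_zero, mul_zero]

variable {ι R : Type*} [Field R] [CharZero R] {L : Submodule R (ι → R[X])}

theorem coeffSpace_antitone (hL : DerivMulClosed L) : Antitone (coeffSpace L) :=
  antitone_nat_of_succ_le fun _ _ ha =>
    mem_coeffSpace_of_derivative_mem (hL.derivative_mem ha)

theorem mul_mem_coeffSpace (hL : DerivMulClosed L) {a b : ι → R} {i j k : ℕ}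
    (ha : a ∈ coeffSpace L i) (hb : b ∈ coeffSpace L j) (hk : i + j = k + 1) :
    a * b ∈ coeffSpace L k := by
  refine mem_coeffSpace_of_derivative_mem ?_
  simpa only [LinearMap.compLeft_apply, Function.comp_apply, monomial_mul_monomial, hk,
    Pi.mul_apply] using hL.derivative_mul_mem ha hb

variable [Finite ι]

theorem comp_mem_coeffSpace_one (hL : DerivMulClosed L) {a : ι → R}
    (ha : a ∈ coeffSpace L 1) {φ : R → R} (hφ : φ 0 = 0) : φ ∘ a ∈ coeffSpace L 1 := by
  refine hL.mem_of_coeff_eq ha ha (fun y => φ (y / 2) / (y / 2)) fun v j => ?_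
  simp only [LinearMap.compLeft_apply, Function.comp_apply, coeff_monomial]
  split_ifs with hj
  · subst hj
    by_cases hav : a v = 0
    · simp [hav, hφ]
    · norm_num
      field_simp
  · simp

theorem support_indicator_mem (hL : DerivMulClosed L) {a : ι → R}
    (ha : a ∈ coeffSpace L 1) : a.support.indicator 1 ∈ coeffSpace L 1 := by
  convert hL.comp_mem_coeffSpace_one ha (φ := fun y => if y = 0 then 0 else 1) (if_pos rfl) using 1
  ext v
  simp [Set.indicator_apply, ite_not]

theorem levelSet_indicator_mem (hL : DerivMulClosed L) {K : Set ι}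
    (hK : K.indicator 1 ∈ coeffSpace L 1) {a : ι → R} (ha : K.indicator a ∈ coeffSpace L 1)
    (r : R) : {v ∈ K | a v = r}.indicator 1 ∈ coeffSpace L 1 := by
  have hne := hL.support_indicator_mem (Submodule.sub_mem _ ha (Submodule.smul_mem _ r hK))
  convert Submodule.sub_mem _ hK hne using 1
  ext v
  by_cases hv : v ∈ K <;> by_cases har : a v = r <;> simp [hv, har, sub_eq_zero]

theorem joint_levelSet_indicator_mem (hL : DerivMulClosed L) {K : Set ι}
    (hK : K.indicator 1 ∈ coeffSpace L 1) {κ : Type*} (s : Finset κ) {a : κ → ι → R}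
    (ha : ∀ i ∈ s, K.indicator (a i) ∈ coeffSpace L 1) (r : κ → R) :
    {v ∈ K | ∀ i ∈ s, a i v = r i}.indicator 1 ∈ coeffSpace L 1 := by
  induction s using Finset.induction with
  | empty => simpa using hK
  | insert i s _ ih =>
    have hs := ih fun j hj => ha j (Finset.mem_insert_of_mem hj)
    have hi := hL.levelSet_indicator_mem hK (ha i (Finset.mem_insert_self i s)) (r i)
    convert hL.mul_mem_coeffSpace hi hs rfl using 1
    rw [← Set.inter_indicator_one]
    congr 1
    ext v
    simp only [Finset.mem_insert, forall_eq_or_imp, Set.mem_inter_iff, Set.mem_ofPred_eq]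
    tauto

theorem indicator_mem (hL : DerivMulClosed L) {K : Set ι}
    (hK : K.indicator 1 ∈ coeffSpace L 1) {F : ι → R[X]} (hF : F ∈ L) : K.indicator F ∈ L := by
  refine hL.mem_of_coeff_eq hK hF (fun y => if y = 0 then 0 else 1) fun v j => ?_
  by_cases hv : v ∈ K <;> simp [hv, Nat.cast_add_one_ne_zero]

theorem indicator_coeff_mem (hL : DerivMulClosed L) {K : Set ι}
    (hK : K.indicator 1 ∈ coeffSpace L 1) {F : ι → R[X]} (hF : F ∈ L) (j : ℕ) :
    K.indicator (fun v => (F v).coeff j) ∈ coeffSpace L j := by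
  refine hL.mem_of_coeff_eq hK hF (fun y => if y = j + 1 then 1 else 0) fun v i => ?_
  have hj : (0 : R) ≠ j + 1 := (Nat.cast_add_one_ne_zero j).symm
  by_cases hv : v ∈ K
  · obtain rfl | hij := eq_or_ne i j
    · simp [hv]
    · simp [hv, coeff_monomial_of_ne, hij]
  · simp [hv, hj]

variable {F : ι → R[X]}

theorem topDegree_indicator_mem (hL : DerivMulClosed L) (hF : F ∈ L)
    (hadj : ∀ v, (F v).nextCoeff = 0) {n : ℕ} (hdeg : ∀ v, (F v).natDegree ≤ n + 1) :
    {v | (F v).natDegree = n + 1}.indicator 1 ∈ coeffSpace L 1 := by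
  let b : ι → R := fun v => (n + 1).factorial * (F v).leadingCoeff
  have hderiv := hL.iterate_derivative_mem hF n
  have hsq : {v | (F v).natDegree = n + 1}.indicator (b * b) ∈ coeffSpace L 1 := by
    refine mem_coeffSpace_of_derivative_mem ?_
    convert hL.derivative_mul_mem hderiv hderiv using 2 with v
    by_cases hv : (F v).natDegree = n + 1
    · simp [hv, iterate_derivative_of_nextCoeff_eq_zero hv (hadj v), monomial_mul_monomial, b]
    · have hconst : derivative (derivative^[n] (F v)) = 0 := by
        rw [← Function.iterate_succ_apply' derivative]
        exact iterate_derivative_eq_zero (lt_of_le_of_ne (hdeg v) hv)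
      simp [hv, derivative_mul, hconst]
  convert hL.support_indicator_mem hsq using 2
  ext v
  have hfact : ((n + 1).factorial : R) ≠ 0 := Nat.cast_ne_zero.2 (Nat.factorial_ne_zero _)
  have hlead (h : (F v).natDegree = n + 1) : F v ≠ 0 :=
    ne_zero_of_natDegree_gt (n.lt_succ_self.trans_eq h.symm)
  simpa [b, hfact] using hlead

theorem topDegree_mul_coeff_zero_mem (hL : DerivMulClosed L) (hF : F ∈ L)
    (hadj : ∀ v, (F v).nextCoeff = 0) {n : ℕ} (hdeg : ∀ v, (F v).natDegree ≤ n + 1) :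
    {v | (F v).natDegree = n + 1}.indicator (fun v => (F v).coeff (n + 1) * (F v).coeff 0) ∈
      coeffSpace L 1 := by
  have hK := hL.topDegree_indicator_mem hF hadj hdeg
  obtain rfl | hn := Nat.eq_zero_or_pos n
  · convert Submodule.zero_mem _ using 1
    refine Set.indicator_eq_zero'.2 (Set.disjoint_right.2 fun v (hv : _ = 1) => ?_)
    have hnext := hadj v
    rw [nextCoeff_of_natDegree_pos (by lia), hv, Nat.sub_self] at hnext
    simp [hnext]
  · rw [Set.indicator_mul]
    exact hL.mul_mem_coeffSpace
      (hL.coeffSpace_antitone (Nat.succ_le_succ hn) (hL.indicator_coeff_mem hK hF (n + 1)))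
      (hL.indicator_coeff_mem hK hF 0) rfl

theorem topDegree_fiber_indicator_mem (hL : DerivMulClosed L) (hF : F ∈ L)
    (hadj : ∀ v, (F v).nextCoeff = 0) {n : ℕ} (hdeg : ∀ v, (F v).natDegree ≤ n + 1) {v₀ : ι}
    (hv₀ : (F v₀).natDegree = n + 1) : {v | F v = F v₀}.indicator 1 ∈ coeffSpace L 1 := by
  have hK := hL.topDegree_indicator_mem hF hadj hdeg
  have hcoeff : ∀ j ∈ Finset.Icc 1 (n + 1),
      {v | (F v).natDegree = n + 1}.indicator (fun v => (F v).coeff j) ∈ coeffSpace L 1 :=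
    fun j hj => hL.coeffSpace_antitone (Finset.mem_Icc.1 hj).1 (hL.indicator_coeff_mem hK hF j)
  have hpos := hL.joint_levelSet_indicator_mem hK _ hcoeff fun j => (F v₀).coeff j
  have hzero := hL.levelSet_indicator_mem hK (hL.topDegree_mul_coeff_zero_mem hF hadj hdeg)
    ((F v₀).coeff (n + 1) * (F v₀).coeff 0)
  convert hL.mul_mem_coeffSpace hpos hzero rfl using 1
  rw [← Set.inter_indicator_one]
  congr 1
  ext v
  refine ⟨fun (h : F v = F v₀) => by simp [h, hv₀],
    fun ⟨⟨(hv : _ = n + 1), hpos⟩, _, hzero⟩ => ?_⟩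
  have hlead : (F v₀).coeff (n + 1) ≠ 0 := by
    rw [← hv₀, coeff_natDegree, leadingCoeff_ne_zero]
    exact ne_zero_of_natDegree_gt (n.lt_succ_self.trans_eq hv₀.symm)
  ext j
  obtain rfl | hj := Nat.eq_zero_or_pos j
  · rw [hpos _ (Finset.right_mem_Icc.2 (by lia))] at hzero
    exact mul_left_cancel₀ hlead hzero
  obtain hjn | hjn := le_or_gt j (n + 1)
  · exact hpos j (Finset.mem_Icc.2 ⟨hj, hjn⟩)
  · rw [coeff_eq_zero_of_natDegree_lt (hv ▸ hjn), coeff_eq_zero_of_natDegree_lt (hv₀ ▸ hjn)]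

theorem fiber_indicator_mem (hL : DerivMulClosed L) (hF : F ∈ L)
    (hadj : ∀ v, (F v).nextCoeff = 0) {v₀ : ι} (hv₀ : (F v₀).natDegree ≠ 0) :
    {v | F v = F v₀}.indicator 1 ∈ coeffSpace L 1 := by
  obtain ⟨N, hN⟩ : ∃ N, ∀ v, (F v).natDegree ≤ N := by
    have := Fintype.ofFinite ι
    exact ⟨_, fun v => Finset.le_sup (f := fun v => (F v).natDegree) (Finset.mem_univ v)⟩
  induction N generalizing F with
  | zero => exact absurd (Nat.le_zero.1 (hN v₀)) hv₀
  | succ N ih =>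
    by_cases htop : (F v₀).natDegree = N + 1
    · exact hL.topDegree_fiber_indicator_mem hF hadj hN htop
    set K : Set ι := {v | (F v).natDegree = N + 1}
    have hK : K.indicator 1 ∈ coeffSpace L 1 := hL.topDegree_indicator_mem hF hadj hN
    have hFK : Kᶜ.indicator F ∈ L := by
      rw [Set.indicator_compl]
      exact L.sub_mem hF (hL.indicator_mem hK hF)
    have hv₀K : Kᶜ.indicator F v₀ = F v₀ := Set.indicator_of_mem htop F
    have hfiber : {v | F v = F v₀} = {v | Kᶜ.indicator F v = Kᶜ.indicator F v₀} := by
      ext v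
      rw [hv₀K]
      by_cases hv : v ∈ K
      · have hne : F v ≠ F v₀ := fun h => htop (h ▸ hv)
        have hne' : 0 ≠ F v₀ := fun h => hv₀ (by simp [← h])
        simp [hv, hne, hne']
      · simp [hv]
    rw [hfiber]
    refine ih hFK (fun v => ?_) (hv₀K.symm ▸ hv₀) fun v => ?_ <;> by_cases hv : v ∈ K
    · simp [hv, nextCoeff]
    · simp [hv, hadj v]
    · simp [hv]
    · simpa [hv] using Nat.le_of_lt_succ (lt_of_le_of_ne (hN v) hv)

end DerivMulClosed

/-! ### Adjusted polynomials -/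

theorem adjRep_eq_taylor (g : ℝ[X]) : adjRep g = taylor (-adjShift g) g := by
  rw [taylor_apply, C_neg, ← sub_eq_add_neg, adjRep]

theorem natDegree_adjRep (g : ℝ[X]) : (adjRep g).natDegree = g.natDegree := by
  rw [adjRep_eq_taylor, natDegree_taylor]

theorem nextCoeff_adjRep (g : ℝ[X]) : (adjRep g).nextCoeff = 0 := by
  rw [adjRep_eq_taylor, nextCoeff_taylor]
  obtain hg | hg := Nat.eq_zero_or_pos g.natDegree
  · simp [hg, nextCoeff]
  · have hdeg : (g.natDegree : ℝ) ≠ 0 := Nat.cast_ne_zero.2 hg.ne'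
    have hlead : g.leadingCoeff ≠ 0 := leadingCoeff_ne_zero.2 (ne_zero_of_natDegree_gt hg)
    rw [nextCoeff_of_natDegree_pos hg, adjShift]
    field_simp
    ring

theorem eval_adjRep_add_adjShift (g : ℝ[X]) (x : ℝ) :
    (adjRep g).eval (x + adjShift g) = g.eval x := by
  simp [adjRep]

theorem polyEquiv_iff_adjRep_eq {f g : ℝ[X]} : PolyEquiv f g ↔ adjRep f = adjRep g := by
  constructor
  · rintro ⟨δ, hδ⟩
    have hfg : f = taylor δ g := Polynomial.funext fun x => by rw [hδ, taylor_eval]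
    have hshift : adjRep f = taylor (-adjShift f + δ + adjShift g) (adjRep g) := by
      rw [adjRep_eq_taylor f, adjRep_eq_taylor g, taylor_taylor, add_neg_cancel_right,
        ← taylor_taylor, ← hfg]
    rw [hshift]
    exact taylor_eq_self_of_nextCoeff_eq_zero (nextCoeff_adjRep g) (hshift ▸ nextCoeff_adjRep f)
  · refine fun h => ⟨adjShift f - adjShift g, fun x => ?_⟩
    rw [← eval_adjRep_add_adjShift f, h, ← eval_adjRep_add_adjShift g]
    ring_nf

/-- The shift `δ_{cv}` making `V''_{cv}` adjusted. -/
def targetShift {V : Type} (Vp : V → V → ℝ[X]) (c v : V) : ℝ :=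
  adjShift (derivative (derivative (Vp c v)))

theorem natDegree_ft {V : Type} (Vp : V → V → ℝ[X]) (c v : V) :
    (ft Vp c v).natDegree = (Vp c v).natDegree - 2 := by
  rw [ft, natDegree_adjRep, natDegree_derivative, natDegree_derivative, Nat.sub_sub]

theorem eval_derivative_derivative_neg {f g : ℝ[X]} (h : ∀ x, g.eval x = f.eval (-x)) (x : ℝ) :
    (derivative (derivative g)).eval x = (derivative (derivative f)).eval (-x) := by
  have hg : g = f.comp (-X) := Polynomial.funext fun x => by simp [h]
  simp [hg, derivative_comp]

/-! ### Interaction fields -/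

section

variable {V : Type}

/-- The vector field `∑_{v ≠ c} F_v(q_c - q_v + δ_v) ∂_{p_v}`, linear in the family `F`. The
`∂_{p_c}` component is dropped, so the value of `F` at `c` plays no role. -/
def interactionField (δ : V → ℝ) (c : V) : (V → ℝ[X]) →ₗ[ℝ] (Phase V → Phase V) where
  toFun F x := (0, fun v => if v = c then 0 else (F v).eval (x.1 c - x.1 v + δ v))
  map_add' F H := by
    ext x v
    · simp
    · by_cases hv : v = c <;> simp [hv]
  map_smul' r F := by
    ext x v
    · simp
    · by_cases hv : v = c <;> simp [hv]

/-- The coordinate `q_v` as a linear functional on phase space. -/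
def position (v : V) : Phase V →L[ℝ] ℝ := .proj v ∘L .fst ℝ (V → ℝ) (V → ℝ)

/-- The coordinate `p_v` as a linear functional on phase space. -/
def momentum (v : V) : Phase V →L[ℝ] ℝ := .proj v ∘L .snd ℝ (V → ℝ) (V → ℝ)

theorem hasFDerivAt_eval_sub [Finite V] (p : ℝ[X]) (u v : V) (s : ℝ) (x : Phase V) :
    HasFDerivAt (fun x : Phase V => p.eval (x.1 u - x.1 v + s))
      ((derivative p).eval (x.1 u - x.1 v + s) • (position u - position v)) x := by
  have := Fintype.ofFinite V
  have hlin : HasFDerivAt (fun x : Phase V => x.1 u - x.1 v + s) (position u - position v) x :=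
    (position u - position v).hasFDerivAt.add_const s
  exact (p.hasDerivAt _).comp_hasFDerivAt x hlin

theorem hasFDerivAt_interactionField [Finite V] (δ : V → ℝ) (c : V) (F : V → ℝ[X])
    (x : Phase V) :
    HasFDerivAt (interactionField δ c F)
      (ContinuousLinearMap.prod 0 (.pi fun v => if v = c then 0 else
        (derivative (F v)).eval (x.1 c - x.1 v + δ v) • (position c - position v))) x := by
  have := Fintype.ofFinite V
  refine (hasFDerivAt_const 0 x).prodMk (hasFDerivAt_pi.2 fun v => ?_)
  split_ifs
  · exact hasFDerivAt_const 0 x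
  · exact hasFDerivAt_eval_sub (F v) c v (δ v) x

theorem fderiv_interactionField_apply [Finite V] (δ : V → ℝ) (c : V) (F : V → ℝ[X])
    (x y : Phase V) :
    fderiv ℝ (interactionField δ c F) x y = (0, fun v => if v = c then 0 else
      (derivative (F v)).eval (x.1 c - x.1 v + δ v) * (y.1 c - y.1 v)) := by
  rw [(hasFDerivAt_interactionField δ c F x).fderiv]
  ext v
  · rfl
  · by_cases hv : v = c <;> simp [hv, position]

variable [Fintype V] [DecidableEq V] (G : SimpleGraph V) [DecidableRel G.Adj]
  {γ : V → ℝ} {U : V → ℝ → ℝ} {Vp : V → V → ℝ[X]}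

theorem hasFDerivAt_X0 (hU : ∀ v, Differentiable ℝ (deriv (U v))) (x : Phase V) :
    HasFDerivAt (X0 G γ U Vp)
      ((ContinuousLinearMap.snd ℝ (V → ℝ) (V → ℝ)).prod (.pi fun v =>
        -γ v • momentum v - deriv (deriv (U v)) (x.1 v) • position v -
          ∑ w with G.Adj v w, (derivative (derivative (Vp v w))).eval (x.1 v - x.1 w) •
            (position v - position w))) x := by
  refine hasFDerivAt_snd.prodMk (hasFDerivAt_pi.2 fun v => ?_)
  refine HasFDerivAt.sub (HasFDerivAt.sub ?_ ?_) (HasFDerivAt.fun_sum fun w _ => ?_)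
  · exact (momentum v).hasFDerivAt.const_smul (-γ v)
  · exact (hU v _).hasDerivAt.comp_hasFDerivAt x (position v).hasFDerivAt
  · simpa only [add_zero] using hasFDerivAt_eval_sub (derivative (Vp v w)) v w 0 x

theorem fderiv_X0_apply (hU : ∀ v, Differentiable ℝ (deriv (U v))) (x y : Phase V) :
    fderiv ℝ (X0 G γ U Vp) x y = (y.2, fun v =>
      -γ v * y.2 v - deriv (deriv (U v)) (x.1 v) * y.1 v -
        ∑ w with G.Adj v w,
          (derivative (derivative (Vp v w))).eval (x.1 v - x.1 w) * (y.1 v - y.1 w)) := by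
  rw [(hasFDerivAt_X0 G hU x).fderiv]
  ext v <;> simp [position, momentum]

theorem lieB_dq (c : V) (Z : Phase V → Phase V) :
    lieB (dq c) Z = fun x => fderiv ℝ Z x (Pi.single c 1, 0) := by
  funext x
  have hconst : fderiv ℝ (dq c) x = 0 := fderiv_const_apply _
  rw [lieB, hconst, zero_apply, sub_zero, dq]

theorem lieB_dq_interactionField (δ : V → ℝ) (c : V) (F : V → ℝ[X]) :
    lieB (dq c) (interactionField δ c F) =
      interactionField δ c (fun v => derivative (F v)) := by
  rw [lieB_dq]
  ext x v <;> rw [fderiv_interactionField_apply]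
  · rfl
  · by_cases hv : v = c <;> simp [interactionField, hv]

theorem lieB_interactionField_X0 (hU : ∀ v, Differentiable ℝ (deriv (U v))) (δ : V → ℝ) (c : V)
    (F : V → ℝ[X]) (x : Phase V) :
    lieB (interactionField δ c F) (X0 G γ U Vp) x =
      ((interactionField δ c F x).2, fun v => if v = c then 0 else
        -γ v * (F v).eval (x.1 c - x.1 v + δ v) -
          (derivative (F v)).eval (x.1 c - x.1 v + δ v) * (x.2 c - x.2 v)) := by
  rw [lieB, fderiv_X0_apply G hU, fderiv_interactionField_apply]
  ext v
  · simp
  · by_cases hv : v = c <;> simp [interactionField, X0, hv]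

theorem differentiable_lieB_interactionField_X0 (hU : ∀ v, Differentiable ℝ (deriv (U v)))
    (δ : V → ℝ) (c : V) (F : V → ℝ[X]) :
    Differentiable ℝ (lieB (interactionField δ c F) (X0 G γ U Vp)) := by
  have heval (p : ℝ[X]) (v : V) :
      Differentiable ℝ fun x : Phase V => p.eval (x.1 c - x.1 v + δ v) := fun x =>
    (hasFDerivAt_eval_sub p c v (δ v) x).differentiableAt
  rw [funext (lieB_interactionField_X0 G hU δ c F)]
  refine Differentiable.prodMk (fun x =>
    (hasFDerivAt_interactionField δ c F x).differentiableAt.snd) (differentiable_pi.2 fun v => ?_)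
  split_ifs
  · exact differentiable_const 0
  · have := heval (F v) v
    have := heval (derivative (F v)) v
    fun_prop

theorem fderiv_lieB_interactionField_X0_apply (hU : ∀ v, Differentiable ℝ (deriv (U v)))
    (δ : V → ℝ) (c : V) (F : V → ℝ[X]) (x : Phase V) (h : V → ℝ) :
    fderiv ℝ (lieB (interactionField δ c F) (X0 G γ U Vp)) x (0, h) =
      (0, fun v => if v = c then 0 else
        -((derivative (F v)).eval (x.1 c - x.1 v + δ v) * (h c - h v))) := by
  have hline (t : ℝ) : lieB (interactionField δ c F) (X0 G γ U Vp) (x + t • (0, h)) =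
      lieB (interactionField δ c F) (X0 G γ U Vp) x + t • (0, fun v => if v = c then 0 else
        -((derivative (F v)).eval (x.1 c - x.1 v + δ v) * (h c - h v))) := by
    simp only [lieB_interactionField_X0 G hU]
    ext v
    · simp [interactionField]
    · by_cases hv : v = c
      · simp [hv]
      · simp only [hv, ↓reduceIte, Prod.smul_mk, smul_zero, Prod.fst_add, Pi.add_apply,
          Pi.zero_apply, add_zero, neg_mul, Prod.snd_add, Pi.smul_apply, smul_eq_mul,
          Prod.mk_add_mk, mul_neg]
        ring
  rw [← (differentiable_lieB_interactionField_X0 G hU δ c F x).lineDeriv_eq_fderiv, lineDeriv,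
    funext hline]
  exact ((hasDerivAt_id (0 : ℝ)).smul_const _ |>.const_add _).deriv.trans (one_smul ℝ _)

theorem lieB_lieB_interactionField (hU : ∀ v, Differentiable ℝ (deriv (U v))) (δ : V → ℝ) (c : V)
    (F H : V → ℝ[X]) :
    lieB (lieB (interactionField δ c F) (X0 G γ U Vp)) (interactionField δ c H) =
      -interactionField δ c (fun v => derivative (F v * H v)) := by
  funext x
  have hvert : interactionField δ c H x = (0, (interactionField δ c H x).2) := rfl
  rw [lieB, fderiv_interactionField_apply, hvert, fderiv_lieB_interactionField_X0_apply G hU,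
    lieB_interactionField_X0 G hU]
  ext v
  · simp [interactionField]
  · by_cases hv : v = c
    · simp [interactionField, hv]
    · simp only [interactionField, LinearMap.coe_mk, AddHom.coe_mk, ↓reduceIte, hv, derivative_mul,
        eval_add, eval_mul, Prod.snd_sub, Prod.snd_neg, Pi.sub_apply, Pi.neg_apply]
      ring

theorem lieB_dq_X0 (hU : ∀ v, Differentiable ℝ (deriv (U v))) {c : V}
    (hsym : ∀ v, G.Adj c v → ∀ x, (Vp v c).eval x = (Vp c v).eval (-x)) :
    lieB (dq c) (X0 G γ U Vp) =
      interactionField (targetShift Vp c) c ((Tset G c : Set V).indicator (ft Vp c)) +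
        fun x => (-deriv (deriv (U c)) (x.1 c) - ∑ w with G.Adj c w,
          (derivative (derivative (Vp c w))).eval (x.1 c - x.1 w)) • dp c x := by
  rw [lieB_dq]
  funext x
  rw [fderiv_X0_apply G hU]
  ext v
  · simp [interactionField, dp]
  obtain rfl | hvc := eq_or_ne v c
  · have hw (w : V) (hvw : G.Adj v w) : (Pi.single v 1 : V → ℝ) w = 0 :=
      Pi.single_eq_of_ne hvw.ne' 1
    simp +contextual [interactionField, dp, Finset.sum_filter, hw]
  · have hpair (w : V) : (Pi.single c 1 : V → ℝ) w = if w = c then 1 else 0 :=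
      Pi.single_apply c 1 w
    by_cases hadj : G.Adj c v
    · have hsymm := eval_derivative_derivative_neg (hsym v hadj) (x.1 v - x.1 c)
      rw [neg_sub] at hsymm
      simp [interactionField, dp, hvc, hpair, Finset.sum_filter, Tset, hadj, hadj.symm, ft,
        targetShift, eval_adjRep_add_adjShift, hsymm]
    · simp [interactionField, dp, hvc, hpair, Finset.sum_filter, Tset, hadj, G.adj_comm v c]

/-- The collection `𝓜` as a vector space. A member is required because `𝓜` is empty, without the
zero field, when `V* = ∅`. -/
def MM.toSubmodule {Vstar : Finset V} {X₀ Y : Phase V → Phase V} (h : MM Vstar X₀ Y) :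
    Submodule ℝ (Phase V → Phase V) where
  carrier := {Z | MM Vstar X₀ Z}
  add_mem' := MM.add
  zero_mem' := zero_smul ℝ Y ▸ h.smul 0
  smul_mem' r _ hZ := hZ.smul r

variable {Vstar : Finset V} {c : V}

/-- The space of those families `F` whose interaction field lies in `𝓜`. -/
def interactionSpace {X₀ : Phase V → Phase V} (hc : MM Vstar X₀ (dp c)) (δ : V → ℝ) :
    Submodule ℝ (V → ℝ[X]) :=
  hc.toSubmodule.comap (interactionField δ c)

theorem dpSum_eq (δ : V → ℝ) (c : V) (A : Finset V) :
    dpSum A = interactionField δ c (fun v => monomial 0 ((A : Set V).indicator 1 v)) +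
      ((A : Set V).indicator 1 c : ℝ) • dp c := by
  ext x v
  · simp [dpSum, interactionField, dp]
  · by_cases hcA : c ∈ A <;> by_cases hv : v = c <;> by_cases hvA : v ∈ A <;>
      simp_all [dpSum, interactionField, dp, Pi.single_apply]

theorem dpSum_mem_iff {X₀ : Phase V → Phase V} (hc : MM Vstar X₀ (dp c)) (δ : V → ℝ)
    {A : Finset V} :
    MM Vstar X₀ (dpSum A) ↔ (A : Set V).indicator 1 ∈ coeffSpace (interactionSpace hc δ) 0 := by
  change dpSum A ∈ hc.toSubmodule ↔ _
  rw [dpSum_eq δ c, Submodule.add_mem_iff_left _ (Submodule.smul_mem _ _ hc)]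
  rfl

theorem derivMulClosed_interactionSpace (hU : ∀ v, Differentiable ℝ (deriv (U v)))
    (hc : Controllable Vstar (X0 G γ U Vp) c) (δ : V → ℝ) :
    DerivMulClosed (interactionSpace hc.2 δ) where
  derivative_mem hF := by
    have h := hc.1.lie hF
    rwa [lieB_dq_interactionField] at h
  derivative_mul_mem hF hH := by
    have h := (MM.lieX hF).lie hH
    rw [lieB_lieB_interactionField G hU] at h
    exact hc.2.toSubmodule.neg_mem_iff.1 h

theorem indicator_ft_mem_interactionSpace (hU : ∀ v, ContDiff ℝ (⊤ : ℕ∞) (U v))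
    (hsym : ∀ v, G.Adj c v → ∀ x, (Vp v c).eval x = (Vp c v).eval (-x))
    (hc : Controllable Vstar (X0 G γ U Vp) c) :
    (Tset G c : Set V).indicator (ft Vp c) ∈ interactionSpace hc.2 (targetShift Vp c) := by
  have hderiv (v : V) : ContDiff ℝ (⊤ : ℕ∞) (deriv (U v)) := (contDiff_infty_iff_deriv.1 (hU v)).2
  have hX := lieB_dq_X0 G (γ := γ) (fun v => (hderiv v).differentiable (by simp)) hsym
  have hself : MM Vstar (X0 G γ U Vp) fun x => (-deriv (deriv (U c)) (x.1 c) -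
      ∑ w with G.Adj c w, (derivative (derivative (Vp c w))).eval (x.1 c - x.1 w)) • dp c x := by
    refine hc.2.mulS _ ?_
    have hV (p : ℝ[X]) : ContDiff ℝ (⊤ : ℕ∞) fun x => p.eval x := by
      simpa using p.contDiff_aeval (𝕜 := ℝ) (⊤ : ℕ∞)
    refine ContDiff.sub ?_ (ContDiff.sum fun w _ => ?_)
    · exact ((contDiff_infty_iff_deriv.1 (hderiv c)).2.comp (by fun_prop)).neg
    · exact (hV _).comp (by fun_prop)
  exact (Submodule.add_mem_iff_left hc.2.toSubmodule hself).1 (hX ▸ hc.1.lieX)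

/-- The equivalence class of `v₀` among the neighbors of `c`, as a set of vertices. -/
def equivClass (Vp : V → V → ℝ[X]) (c v₀ : V) : Finset V :=
  (Tset G c).filter fun w =>
    PolyEquiv (derivative (derivative (Vp c w))) (derivative (derivative (Vp c v₀)))

theorem coe_equivClass {v₀ : V} (hv₀ : v₀ ∈ Tset G c) (hne : ft Vp c v₀ ≠ 0) :
    (equivClass G Vp c v₀ : Set V) = {v | (Tset G c : Set V).indicator (ft Vp c) v =
      (Tset G c : Set V).indicator (ft Vp c) v₀} := by
  ext v
  rw [equivClass, Finset.coe_filter, Set.mem_ofPred_eq, Set.mem_ofPred_eq,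
    Set.indicator_of_mem (Finset.mem_coe.2 hv₀), polyEquiv_iff_adjRep_eq]
  by_cases hv : v ∈ Tset G c
  · simp [hv, ft]
  · simp [hv, hne.symm]

theorem equivClass_indicator_mem (hU : ∀ v, ContDiff ℝ (⊤ : ℕ∞) (U v))
    (hsym : ∀ v, G.Adj c v → ∀ x, (Vp v c).eval x = (Vp c v).eval (-x))
    (hc : Controllable Vstar (X0 G γ U Vp) c) {v₀ : V} (hv₀ : v₀ ∈ Tset G c)
    (hdeg : 3 ≤ (Vp c v₀).natDegree) :
    (equivClass G Vp c v₀ : Set V).indicator 1 ∈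
      coeffSpace (interactionSpace hc.2 (targetShift Vp c)) 1 := by
  have hft : 0 < (ft Vp c v₀).natDegree := by rw [natDegree_ft]; lia
  rw [coe_equivClass G hv₀ (ne_zero_of_natDegree_gt hft)]
  have hU' (v : V) : Differentiable ℝ (deriv (U v)) :=
    (contDiff_infty_iff_deriv.1 (hU v)).2.differentiable (by simp)
  have hL := derivMulClosed_interactionSpace G hU' hc (targetShift Vp c)
  refine hL.fiber_indicator_mem (indicator_ft_mem_interactionSpace G hU hsym hc) (fun v => ?_) ?_
  · by_cases hv : v ∈ (Tset G c : Set V)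
    · rw [Set.indicator_of_mem hv]
      exact nextCoeff_adjRep _
    · rw [Set.indicator_of_notMem hv, nextCoeff, natDegree_zero, if_pos rfl]
  · rw [Set.indicator_of_mem (Finset.mem_coe.2 hv₀)]
    exact hft.ne'

end

theorem class_refinement_jointly_controllable_general
    {V : Type} [Fintype V] [DecidableEq V] (G : SimpleGraph V) [DecidableRel G.Adj]
    {Vstar : Finset V} {γ : V → ℝ} {U : V → ℝ → ℝ} {Vp : V → V → ℝ[X]}
    (hU : ∀ v, ContDiff ℝ (⊤ : ℕ∞) (U v))
    (hsym : ∀ u v, G.Adj u v → ∀ x : ℝ, (Vp v u).eval x = (Vp u v).eval (-x))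
    {c : V} (hc : Controllable Vstar (X0 G γ U Vp) c) {v₀ : V}
    (hv₀ : v₀ ∈ Tset G c) (hdeg : 3 ≤ (Vp c v₀).natDegree) :
    MM Vstar (X0 G γ U Vp) (dpSum (equivClass G Vp c v₀)) ∧
      ∀ A : Finset V, MM Vstar (X0 G γ U Vp) (dpSum A) →
        MM Vstar (X0 G γ U Vp) (dpSum (A ∩ equivClass G Vp c v₀)) ∧
        MM Vstar (X0 G γ U Vp) (dpSum (A \ equivClass G Vp c v₀)) ∧
        MM Vstar (X0 G γ U Vp) (dpSum (equivClass G Vp c v₀ \ A)) := by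
  have hU' (v : V) : Differentiable ℝ (deriv (U v)) :=
    (contDiff_infty_iff_deriv.1 (hU v)).2.differentiable (by simp)
  have hL := derivMulClosed_interactionSpace G hU' hc (targetShift Vp c)
  have hK := equivClass_indicator_mem G hU (hsym c) hc hv₀ hdeg
  simp only [dpSum_mem_iff hc.2 (targetShift Vp c)]
  have hK₀ := hL.coeffSpace_antitone zero_le_one hK
  refine ⟨hK₀, fun A hA => ?_⟩
  have hAK := hL.mul_mem_coeffSpace hA hK rfl
  rw [← Set.inter_indicator_one] at hAK
  refine ⟨by rwa [Finset.coe_inter], ?_, ?_⟩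
  · rw [Finset.coe_sdiff, ← Set.sdiff_self_inter, Set.indicator_sdiff Set.inter_subset_left]
    exact Submodule.sub_mem _ hA hAK
  · rw [Finset.coe_sdiff, ← Set.sdiff_inter_self_eq_sdiff,
      Set.indicator_sdiff Set.inter_subset_right]
    exact Submodule.sub_mem _ hK₀ hAK

/-- Lemma 5.2. Let `c` be controllable. Then (i) every
equivalence class `𝒯_i^c` of neighbors of `c` (the class of some `v₀ ∈ 𝒯^c`) is
jointly controllable; and (ii) for every such class and every jointly controllable
set `A`, the sets `A ∩ 𝒯_i^c`, `A \ 𝒯_i^c` and `𝒯_i^c \ A` are jointly controllable. -/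
theorem class_refinement_jointly_controllable
    {V : Type} [Fintype V] [DecidableEq V] (G : SimpleGraph V) [DecidableRel G.Adj]
    (Vstar : Finset V) (γ : V → ℝ) (U : V → ℝ → ℝ) (Vp : V → V → Polynomial ℝ)
    (hγpos : ∀ v ∈ Vstar, 0 < γ v) (hγ0 : ∀ v ∉ Vstar, γ v = 0)
    (hU : ∀ v, ContDiff ℝ (⊤ : ℕ∞) (U v))
    (hsym : ∀ u v, G.Adj u v → ∀ x : ℝ, (Vp v u).eval x = (Vp u v).eval (-x))
    (hdeg : ∀ u v, G.Adj u v → 3 ≤ (Vp u v).natDegree)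
    (c : V) (hc : Controllable Vstar (X0 G γ U Vp) c) :
    (∀ v₀ ∈ Tset G c,
      MM Vstar (X0 G γ U Vp)
        (dpSum ((Tset G c).filter fun w =>
          PolyEquiv (derivative (derivative (Vp c w))) (derivative (derivative (Vp c v₀)))))) ∧
    (∀ v₀ ∈ Tset G c, ∀ A : Finset V,
      MM Vstar (X0 G γ U Vp) (dpSum A) →
        MM Vstar (X0 G γ U Vp)
          (dpSum (A ∩ (Tset G c).filter (fun w =>
            PolyEquiv (derivative (derivative (Vp c w))) (derivative (derivative (Vp c v₀)))))) ∧
        MM Vstar (X0 G γ U Vp)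
          (dpSum (A \ (Tset G c).filter (fun w =>
            PolyEquiv (derivative (derivative (Vp c w))) (derivative (derivative (Vp c v₀)))))) ∧
        MM Vstar (X0 G γ U Vp)
          (dpSum ((Tset G c).filter (fun w =>
            PolyEquiv (derivative (derivative (Vp c w))) (derivative (derivative (Vp c v₀)))) \ A))) := by
  have hgen (v₀ : V) (hv₀ : v₀ ∈ Tset G c) := class_refinement_jointly_controllable_general G hU
    hsym hc hv₀ (hdeg c v₀ (Finset.mem_filter.1 hv₀).2)
  exact ⟨fun v₀ hv₀ => (hgen v₀ hv₀).1, fun v₀ hv₀ => (hgen v₀ hv₀).2⟩
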